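/- There exist constants a > 0 and b ∈ (0,1) such that for every positive integer n, if x and y are independent random vectors in ℝⁿ each distributed according to the standard normal distribution N(0, Iₙ), then the probability that (x, x) ≤ (x, y) is at most a·bⁿ, where (·,·) denotes the standard Euclidean inner product. In other words, the family of standard normal distributions has exponential Fisher separability. -/

import Mathlib

/-!
The proof is the exponential Markov (Chernoff) bound
`P((x,x) ≤ (x,y)) ≤ E exp((x,y) - (x,x))`. Completing the square,
`(x,y) - ‖x‖² - ‖y‖²/2 = -‖x‖²/2 - ‖y - x‖²/2`, so by translation invariance the expectation over
`y` equals `exp(-‖x‖²/2)` (`lintegral_exp_inner`). The expectation of that over `x` is the Gaussian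
integral `(2π)^(-n/2) ∫ exp(-‖x‖²) dx = (2π)^(-n/2) π^(n/2) = (1/√2)^n`
(`lintegral_exp_neg_sq`). Hence `a = 1` and `b = 1/√2` work, and the version for random vectors
follows since the joint law of independent `x, y` is the product measure.
-/

open MeasureTheory ProbabilityTheory Metric
open scoped RealInnerProductSpace ENNReal

/-- A family of probability measures `Pₙ` on `ℝⁿ` has exponential Fisher
separability if there are `a > 0`, `b ∈ (0,1)` such that for every `n`, for
independent `x, y` distributed according to `Pₙ`, the inequality
`(x,x) > (x,y)` fails with probability at most `a·bⁿ`. -/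
def ExpFisherSeparability (P : ∀ n : ℕ, Measure (EuclideanSpace ℝ (Fin n))) : Prop :=
  ∃ a > (0 : ℝ), ∃ b ∈ Set.Ioo (0 : ℝ) 1, ∀ n : ℕ,
    ((P n).prod (P n)) {p | ⟪p.1, p.1⟫ ≤ ⟪p.1, p.2⟫} ≤ ENNReal.ofReal (a * b ^ n)

/-- The standard normal distribution N(0, Iₙ) on ℝⁿ, given by its density
(2π)^(-n/2) exp(-‖z‖²/2) with respect to the Lebesgue measure. -/
noncomputable def stdGaussian (n : ℕ) : Measure (EuclideanSpace ℝ (Fin n)) :=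
  volume.withDensity fun z =>
    ENNReal.ofReal ((2 * Real.pi) ^ (-(n : ℝ) / 2) * Real.exp (-‖z‖ ^ 2 / 2))

theorem lintegral_exp_mul_sq (n : ℕ) {b : ℝ} (hb : 0 < b) :
    ∫⁻ z : EuclideanSpace ℝ (Fin n),
      ENNReal.ofReal ((2 * Real.pi) ^ (-(n : ℝ) / 2) * Real.exp (-b * ‖z‖ ^ 2))
      = ENNReal.ofReal ((2 * Real.pi) ^ (-(n : ℝ) / 2) * (Real.pi / b) ^ ((n : ℝ) / 2)) := by
  have hI := GaussianFourier.integral_rexp_neg_mul_sq_norm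
    (V := EuclideanSpace ℝ (Fin n)) hb
  rw [finrank_euclideanSpace_fin] at hI
  -- The integral is nonzero, which rules out the junk value at non-integrable functions.
  have hint : Integrable (fun z : EuclideanSpace ℝ (Fin n) => Real.exp (-b * ‖z‖ ^ 2)) := by
    by_contra h
    rw [integral_undef h] at hI
    have : 0 < (Real.pi / b) ^ ((n : ℝ) / 2) := by positivity
    linarith
  rw [← ofReal_integral_eq_lintegral_ofReal (hint.const_mul _)
    (Filter.Eventually.of_forall fun z => by positivity), integral_const_mul, hI]

theorem stdGaussian_mass (n : ℕ) :
    ∫⁻ z : EuclideanSpace ℝ (Fin n),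
      ENNReal.ofReal ((2 * Real.pi) ^ (-(n : ℝ) / 2) * Real.exp (-‖z‖ ^ 2 / 2)) = 1 := by
  have h := lintegral_exp_mul_sq n (b := 1 / 2) (by norm_num)
  have e : (2 * Real.pi) ^ (-(n : ℝ) / 2) * (Real.pi / (1 / 2)) ^ ((n : ℝ) / 2) = 1 := by
    rw [show Real.pi / (1 / 2) = 2 * Real.pi by ring, ← Real.rpow_add (by positivity)]
    rw [show -(n : ℝ) / 2 + n / 2 = 0 by ring, Real.rpow_zero]
  rw [e, ENNReal.ofReal_one] at h
  rw [← h]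
  refine lintegral_congr fun z => ?_
  congr 3
  ring

theorem measurable_stdGaussian_density (n : ℕ) :
    Measurable fun z : EuclideanSpace ℝ (Fin n) =>
      ENNReal.ofReal ((2 * Real.pi) ^ (-(n : ℝ) / 2) * Real.exp (-‖z‖ ^ 2 / 2)) := by
  fun_prop

instance isProbabilityMeasure_stdGaussian_density (n : ℕ) :
    IsProbabilityMeasure (stdGaussian n) :=
  ⟨by rw [_root_.stdGaussian, withDensity_apply _ MeasurableSet.univ, Measure.restrict_univ,
    stdGaussian_mass]⟩

theorem lintegral_exp_inner (n : ℕ) (x : EuclideanSpace ℝ (Fin n)) :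
    ∫⁻ y, ENNReal.ofReal (Real.exp (⟪x, y⟫ - ⟪x, x⟫)) ∂(stdGaussian n)
      = ENNReal.ofReal (Real.exp (-‖x‖ ^ 2 / 2)) := by
  rw [_root_.stdGaussian, lintegral_withDensity_eq_lintegral_mul _
    (measurable_stdGaussian_density n) (by fun_prop)]
  have key : ∀ y : EuclideanSpace ℝ (Fin n),
      ((fun z : EuclideanSpace ℝ (Fin n) =>
        ENNReal.ofReal ((2 * Real.pi) ^ (-(n : ℝ) / 2) * Real.exp (-‖z‖ ^ 2 / 2))) *
        fun y => ENNReal.ofReal (Real.exp (⟪x, y⟫ - ⟪x, x⟫))) y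
      = ENNReal.ofReal (Real.exp (-‖x‖ ^ 2 / 2)) *
        ENNReal.ofReal ((2 * Real.pi) ^ (-(n : ℝ) / 2) * Real.exp (-‖y - x‖ ^ 2 / 2)) := by
    intro y
    rw [Pi.mul_apply, ← ENNReal.ofReal_mul (by positivity), ← ENNReal.ofReal_mul (by positivity),
      mul_assoc, mul_left_comm (Real.exp (-‖x‖ ^ 2 / 2)), ← Real.exp_add, ← Real.exp_add]
    congr 3
    rw [norm_sub_sq_real, real_inner_self_eq_norm_sq, real_inner_comm x y]
    ring
  rw [lintegral_congr key, lintegral_const_mul _ (by fun_prop),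
    lintegral_sub_right_eq_self (fun z : EuclideanSpace ℝ (Fin n) =>
      ENNReal.ofReal ((2 * Real.pi) ^ (-(n : ℝ) / 2) * Real.exp (-‖z‖ ^ 2 / 2))) x,
    stdGaussian_mass, mul_one]

theorem lintegral_exp_neg_sq (n : ℕ) :
    ∫⁻ x, ENNReal.ofReal (Real.exp (-‖x‖ ^ 2 / 2)) ∂(stdGaussian n)
      = ENNReal.ofReal ((√2)⁻¹ ^ n) := by
  rw [_root_.stdGaussian, lintegral_withDensity_eq_lintegral_mul _
    (measurable_stdGaussian_density n) (by fun_prop)]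
  have e : (2 * Real.pi) ^ (-(n : ℝ) / 2) * (Real.pi / 1) ^ ((n : ℝ) / 2) = (√2)⁻¹ ^ n := by
    rw [Real.mul_rpow (by norm_num) Real.pi_pos.le, mul_assoc, div_one,
      ← Real.rpow_add Real.pi_pos, show -(n : ℝ) / 2 + n / 2 = 0 by ring, Real.rpow_zero, mul_one,
      Real.sqrt_eq_rpow, ← Real.rpow_neg (by norm_num), ← Real.rpow_natCast,
      ← Real.rpow_mul (by norm_num)]
    congr 1
    ring
  rw [← e, ← lintegral_exp_mul_sq n one_pos]
  refine lintegral_congr fun z => ?_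
  rw [Pi.mul_apply, ← ENNReal.ofReal_mul (by positivity), mul_assoc, ← Real.exp_add]
  congr 3
  ring

theorem measurableSet_inner_self_le (n : ℕ) :
    MeasurableSet {p : EuclideanSpace ℝ (Fin n) × EuclideanSpace ℝ (Fin n) |
      ⟪p.1, p.1⟫ ≤ ⟪p.1, p.2⟫} :=
  measurableSet_le (by fun_prop) (by fun_prop)

theorem prod_stdGaussian_le (n : ℕ) :
    ((stdGaussian n).prod (stdGaussian n)) {p | ⟪p.1, p.1⟫ ≤ ⟪p.1, p.2⟫}
      ≤ ENNReal.ofReal (1 * (√2)⁻¹ ^ n) := by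
  calc ((stdGaussian n).prod (stdGaussian n)) {p | ⟪p.1, p.1⟫ ≤ ⟪p.1, p.2⟫}
      = ∫⁻ p in {p | ⟪p.1, p.1⟫ ≤ ⟪p.1, p.2⟫}, 1 ∂((stdGaussian n).prod (stdGaussian n)) := by
        simp
    _ ≤ ∫⁻ p in {p | ⟪p.1, p.1⟫ ≤ ⟪p.1, p.2⟫},
          ENNReal.ofReal (Real.exp (⟪p.1, p.2⟫ - ⟪p.1, p.1⟫))
          ∂((stdGaussian n).prod (stdGaussian n)) := by
        refine setLIntegral_mono' (measurableSet_inner_self_le n) fun p hp => ?_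
        rw [ENNReal.one_le_ofReal, Real.one_le_exp_iff]
        exact sub_nonneg.2 hp
    _ ≤ ∫⁻ p, ENNReal.ofReal (Real.exp (⟪p.1, p.2⟫ - ⟪p.1, p.1⟫))
          ∂((stdGaussian n).prod (stdGaussian n)) := setLIntegral_le_lintegral _ _
    _ = ENNReal.ofReal (1 * (√2)⁻¹ ^ n) := by
        rw [lintegral_prod _ (by fun_prop)]
        simp only [lintegral_exp_inner]
        rw [lintegral_exp_neg_sq, one_mul]

theorem inv_sqrt_two_mem_Ioo : (√2)⁻¹ ∈ Set.Ioo (0 : ℝ) 1 :=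
  ⟨by positivity, inv_lt_one_of_one_lt₀ (Real.lt_sqrt_of_sq_lt (by norm_num))⟩

theorem stmt_16 :
    (∃ a > (0 : ℝ), ∃ b ∈ Set.Ioo (0 : ℝ) 1, ∀ n : ℕ,
      ∀ (Ω : Type) [MeasurableSpace Ω] (μ : Measure Ω) [IsProbabilityMeasure μ]
        (x y : Ω → EuclideanSpace ℝ (Fin n)),
        Measurable x → Measurable y → IndepFun x y μ →
        Measure.map x μ = stdGaussian n → Measure.map y μ = stdGaussian n →
        μ {ω | ⟪x ω, x ω⟫ ≤ ⟪x ω, y ω⟫} ≤ ENNReal.ofReal (a * b ^ n)) ∧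
    ExpFisherSeparability (fun n => stdGaussian n) := by
  refine ⟨⟨1, one_pos, (√2)⁻¹, inv_sqrt_two_mem_Ioo, ?_⟩,
    ⟨1, one_pos, (√2)⁻¹, inv_sqrt_two_mem_Ioo, prod_stdGaussian_le⟩⟩
  intro n Ω _ μ _ x y hx hy hxy hmx hmy
  have h := (indepFun_iff_map_prod_eq_prod_map_map hx.aemeasurable hy.aemeasurable).1 hxy
  rw [hmx, hmy] at h
  have hle := prod_stdGaussian_le n
  rw [← h, Measure.map_apply (hx.prodMk hy) (measurableSet_inner_self_le n)] at hle
  exact hle
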